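/- arXiv:2107.13610 — 2 statements merged into one kernel-verified Lean document; each statement's English description precedes it below -/
import Mathlib

section
/- Let m ≥ 1, let σ_η := ∫_{B_m(0,1)} y₁² dy, let η : [0,∞) → ℝ be given by η(t) = 1 for 0 ≤ t ≤ 1 and η(t) = 0 for t > 1, and let ψ(t) := (1/σ_η) ∫_t^∞ η(s)·s ds. Then for all real numbers 0 < r₂ < r₁, r₁² · ∫_{B_m(0,r₁)} ψ(|v|/r₁) dv − r₂² · ∫_{B_m(0,r₂)} ψ(|v|/r₂) dv = r₁^{m+2} − r₂^{m+2}. -/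
open MeasureTheory

/-! Integrating `ψ(|v|)` over `v` and exchanging the order of integration turns the inner integral
into the volume `s ^ m * vol B(0, 1)` of `{|v| < s}`; in polar coordinates the result is
`(1 / σ_η) * m⁻¹ * ∫ η(|y|) |y|²`. By rotational symmetry `∫ η(|y|) |y|² = m * ∫ η(|y|) y₁²`,
so `∫ ψ(|v|) dv = 1`, and the substitution `v ↦ v / r` gives `r ^ 2 * ∫ ψ(|v| / r) dv = r ^ (m + 2)`
for each radius separately. -/

open Set Metric Module

section LayerCake

variable {α F : Type*} [MeasurableSpace α] {μ : Measure α} [SFinite μ]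
  [NormedAddCommGroup F] [NormedSpace ℝ F] [CompleteSpace F]

theorem integral_setIntegral_Ioi_comp {ν : Measure ℝ} [SFinite ν] {φ : α → ℝ} {g : ℝ → F}
    (hφ : Measurable φ) (hg : AEStronglyMeasurable g ν)
    (hfin : ∀ᵐ s ∂ν, μ {a | φ a < s} ≠ ⊤)
    (hint : Integrable (fun s => μ.real {a | φ a < s} • g s) ν) :
    ∫ a, ∫ s in Ioi (φ a), g s ∂ν ∂μ = ∫ s, μ.real {a | φ a < s} • g s ∂ν := by
  let f : α → ℝ → F := fun a s => {a | φ a < s}.indicator (fun _ => g s) a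
  have hsublevel (s : ℝ) : MeasurableSet {a | φ a < s} := measurableSet_lt hφ measurable_const
  have hf_meas : AEStronglyMeasurable f.uncurry (μ.prod ν) :=
    hg.comp_snd.indicator (measurableSet_lt (hφ.comp measurable_fst) measurable_snd)
  have hf_int : Integrable f.uncurry (μ.prod ν) := by
    refine (integrable_prod_iff' hf_meas).2 ⟨?_, hint.norm.congr (ae_of_all _ fun s => ?_)⟩
    · filter_upwards [hfin] with s hs
      exact (integrable_indicator_iff (hsublevel s)).2 (integrableOn_const (C := g s) hs)
    · simp only [f, Function.uncurry_apply_pair, norm_indicator_eq_indicator_norm,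
        integral_indicator_const _ (hsublevel s), norm_smul, smul_eq_mul,
        Real.norm_of_nonneg measureReal_nonneg]
  calc ∫ a, ∫ s in Ioi (φ a), g s ∂ν ∂μ
      = ∫ a, ∫ s, f a s ∂ν ∂μ := by
        simp_rw [← integral_indicator measurableSet_Ioi]
        rfl
    _ = ∫ s, ∫ a, f a s ∂μ ∂ν := integral_integral_swap hf_int
    _ = ∫ s, μ.real {a | φ a < s} • g s ∂ν := by
        simp only [f, integral_indicator_const _ (hsublevel _)]

end LayerCake

section Haar

variable {E F : Type*} [NormedAddCommGroup E] [NormedSpace ℝ E] [FiniteDimensional ℝ E]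
  [MeasurableSpace E] [BorelSpace E] (μ : Measure E) [μ.IsAddHaarMeasure]
  [NormedAddCommGroup F] [NormedSpace ℝ F]

theorem measureReal_norm_lt {s : ℝ} (hs : 0 < s) :
    μ.real {v | ‖v‖ < s} = s ^ finrank ℝ E * μ.real (ball 0 1) := by
  rw [← ball_zero_eq, measureReal_def, μ.addHaar_ball_of_pos 0 hs, ENNReal.toReal_mul,
    ENNReal.toReal_ofReal (by positivity), measureReal_def]

theorem integral_setIntegral_Ioi_norm [CompleteSpace F] {g : ℝ → F}
    (hg : IntegrableOn (fun s => s ^ finrank ℝ E • g s) (Ioi 0)) :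
    ∫ v, (∫ s in Ioi ‖v‖, g s) ∂μ = μ.real (ball 0 1) • ∫ s in Ioi 0, s ^ finrank ℝ E • g s := by
  have hvol : ∀ s ∈ Ioi (0 : ℝ), μ.real {v | ‖v‖ < s} • g s =
      μ.real (ball 0 1) • s ^ finrank ℝ E • g s := fun s hs => by
    rw [measureReal_norm_lt μ hs, mul_comm, mul_smul]
  have hg_meas : AEStronglyMeasurable g (volume.restrict (Ioi 0)) := by
    have hinv : Measurable fun s : ℝ => (s ^ finrank ℝ E)⁻¹ := by fun_prop
    refine (hinv.aestronglyMeasurable.smul hg.aestronglyMeasurable).congr ?_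
    filter_upwards [ae_restrict_mem measurableSet_Ioi] with s hs
    exact inv_smul_smul₀ (pow_ne_zero _ (ne_of_gt hs)) (g s)
  calc ∫ v, (∫ s in Ioi ‖v‖, g s) ∂μ
      = ∫ v, ∫ s in Ioi ‖v‖, g s ∂volume.restrict (Ioi 0) ∂μ := by
        simp_rw [Measure.restrict_restrict measurableSet_Ioi,
          inter_eq_left.2 (Ioi_subset_Ioi (norm_nonneg _))]
    _ = ∫ s in Ioi 0, μ.real {v | ‖v‖ < s} • g s := by
        refine integral_setIntegral_Ioi_comp measurable_norm hg_meas (ae_of_all _ fun s => ?_)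
          (IntegrableOn.congr_fun (hg.smul (μ.real (ball 0 1))) (fun s hs => (hvol s hs).symm)
            measurableSet_Ioi)
        rw [← ball_zero_eq]
        exact measure_ball_lt_top.ne
    _ = μ.real (ball 0 1) • ∫ s in Ioi 0, s ^ finrank ℝ E • g s := by
        rw [setIntegral_congr_fun measurableSet_Ioi hvol, integral_smul]

theorem finrank_smul_integral_setIntegral_Ioi_norm [Nontrivial E] [CompleteSpace F] {g : ℝ → F}
    (hg : Integrable (fun v => ‖v‖ • g ‖v‖) μ) :
    finrank ℝ E • ∫ v, (∫ s in Ioi ‖v‖, g s) ∂μ = ∫ v, ‖v‖ • g ‖v‖ ∂μ := by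
  have hpow (s : ℝ) : s ^ (finrank ℝ E - 1) • s • g s = s ^ finrank ℝ E • g s := by
    rw [smul_smul, pow_sub_one_mul finrank_pos.ne']
  rw [integrable_fun_norm_addHaar μ (f := fun s => s • g s)] at hg
  simp only [hpow] at hg
  rw [integral_setIntegral_Ioi_norm μ hg, integral_fun_norm_addHaar μ fun s => s • g s]
  simp only [hpow]

theorem integral_comp_norm_div (f : ℝ → F) {r : ℝ} (hr : 0 ≤ r) :
    ∫ v, f (‖v‖ / r) ∂μ = r ^ finrank ℝ E • ∫ v, f ‖v‖ ∂μ := by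
  rw [← Measure.integral_comp_inv_smul_of_nonneg μ (fun v => f ‖v‖) hr]
  simp only [norm_smul, norm_inv, Real.norm_of_nonneg hr, div_eq_inv_mul]

theorem setIntegral_ball_eq_integral {f : E → F} {r : ℝ} (hr : r ≠ 0)
    (hf : ∀ v, r < ‖v‖ → f v = 0) : ∫ v in ball 0 r, f v ∂μ = ∫ v, f v ∂μ := by
  refine setIntegral_eq_integral_of_ae_compl_eq_zero ?_
  filter_upwards [measure_eq_zero_iff_ae_notMem.1 (μ.addHaar_sphere_of_ne_zero 0 hr)]
    with v hv_sphere hv_ball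
  rw [mem_sphere_zero_iff_norm] at hv_sphere
  rw [mem_ball_zero_iff, not_lt] at hv_ball
  exact hf v (hv_ball.lt_of_ne' hv_sphere)

end Haar

section EuclideanSpace

variable {ι : Type*} [Fintype ι] {f : ℝ → ℝ} {i : ι}

theorem exists_linearIsometryEquiv_apply_eq (i j : ι) :
    ∃ e : EuclideanSpace ℝ ι ≃ₗᵢ[ℝ] EuclideanSpace ℝ ι, ∀ y, e y i = y j := by
  classical
  exact ⟨.piLpCongrLeft 2 ℝ ℝ (Equiv.swap i j), fun y => by
    simp [LinearIsometryEquiv.piLpCongrLeft_apply, Equiv.piCongrLeft'_apply]⟩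

theorem integral_radial_mul_sq_coord_eq (f : ℝ → ℝ) (i j : ι) :
    ∫ y : EuclideanSpace ℝ ι, f ‖y‖ * y i ^ 2 = ∫ y : EuclideanSpace ℝ ι, f ‖y‖ * y j ^ 2 := by
  obtain ⟨e, he⟩ := exists_linearIsometryEquiv_apply_eq i j
  simpa only [e.norm_map, he] using (e.measurePreserving.integral_comp
    e.toHomeomorph.measurableEmbedding fun y => f ‖y‖ * y i ^ 2).symm

theorem integrable_radial_mul_sq_coord (j : ι)
    (hf : Integrable fun y : EuclideanSpace ℝ ι => f ‖y‖ * y i ^ 2) :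
    Integrable fun y : EuclideanSpace ℝ ι => f ‖y‖ * y j ^ 2 := by
  obtain ⟨e, he⟩ := exists_linearIsometryEquiv_apply_eq i j
  simpa only [Function.comp_def, e.norm_map, he] using
    e.measurePreserving.integrable_comp_of_integrable hf

theorem integrable_radial_mul_sq_norm
    (hf : Integrable fun y : EuclideanSpace ℝ ι => f ‖y‖ * y i ^ 2) :
    Integrable fun y : EuclideanSpace ℝ ι => f ‖y‖ * ‖y‖ ^ 2 := by
  simp only [EuclideanSpace.real_norm_sq_eq, Finset.mul_sum]
  exact integrable_finsetSum _ fun j _ => integrable_radial_mul_sq_coord j hf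

theorem integral_radial_mul_sq_norm
    (hf : Integrable fun y : EuclideanSpace ℝ ι => f ‖y‖ * y i ^ 2) :
    ∫ y : EuclideanSpace ℝ ι, f ‖y‖ * ‖y‖ ^ 2 =
      Fintype.card ι * ∫ y : EuclideanSpace ℝ ι, f ‖y‖ * y i ^ 2 := by
  simp only [EuclideanSpace.real_norm_sq_eq, Finset.mul_sum]
  rw [integral_finsetSum _ fun j _ => integrable_radial_mul_sq_coord j hf,
    Finset.sum_congr rfl fun j _ => integral_radial_mul_sq_coord_eq f j i,
    Finset.sum_const, nsmul_eq_mul, Finset.card_univ]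

theorem integral_setIntegral_Ioi_norm_eq_integral_radial_mul_sq_coord
    (hf : Integrable fun y : EuclideanSpace ℝ ι => f ‖y‖ * y i ^ 2) :
    ∫ v : EuclideanSpace ℝ ι, ∫ s in Ioi ‖v‖, f s * s =
      ∫ y : EuclideanSpace ℝ ι, f ‖y‖ * y i ^ 2 := by
  have : Nonempty ι := ⟨i⟩
  have hcard : (Fintype.card ι : ℝ) ≠ 0 := Nat.cast_ne_zero.2 Fintype.card_ne_zero
  have hsq (y : EuclideanSpace ℝ ι) : ‖y‖ • (f ‖y‖ * ‖y‖) = f ‖y‖ * ‖y‖ ^ 2 := by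
    rw [smul_eq_mul]
    ring
  have hparts := finrank_smul_integral_setIntegral_Ioi_norm
    (volume : Measure (EuclideanSpace ℝ ι)) (g := fun s => f s * s)
    (by simpa only [hsq] using integrable_radial_mul_sq_norm hf)
  simp only [hsq, integral_radial_mul_sq_norm hf, finrank_euclideanSpace, nsmul_eq_mul] at hparts
  exact mul_left_cancel₀ hcard hparts

theorem setIntegral_ball_sq_coord_pos (i : ι) {r : ℝ} (hr : 0 < r) :
    0 < ∫ y in ball (0 : EuclideanSpace ℝ ι) r, y i ^ 2 := by
  classical
  have hcont : Continuous fun y : EuclideanSpace ℝ ι => y i ^ 2 := by fun_prop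
  have hint : IntegrableOn (fun y : EuclideanSpace ℝ ι => y i ^ 2) (ball 0 r) :=
    (hcont.continuousOn.integrableOn_compact (isCompact_closedBall 0 r)).mono_set
      ball_subset_closedBall
  refine (setIntegral_pos_iff_support_of_nonneg_ae (ae_of_all _ fun _ => sq_nonneg _) hint).2 ?_
  refine (hcont.isOpen_support.inter isOpen_ball).measure_pos _
    ⟨EuclideanSpace.single i (r / 2), ?_, ?_⟩
  · simp [hr.ne']
  · simp [abs_of_pos hr, hr]

end EuclideanSpace

section Normalization

variable {m : ℕ} {i : Fin m} {ση : ℝ} {η ψ : ℝ → ℝ}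

theorem sq_mul_integral_comp_norm_div
    (hσ : ση = ∫ y : EuclideanSpace ℝ (Fin m), η ‖y‖ * y i ^ 2) (hσ0 : ση ≠ 0)
    (hψ : ∀ t, ψ t = (1 / ση) * ∫ s in Ioi t, η s * s) {r : ℝ} (hr : 0 ≤ r) :
    r ^ 2 * ∫ v : EuclideanSpace ℝ (Fin m), ψ (‖v‖ / r) = r ^ (m + 2) := by
  have hη : Integrable fun y : EuclideanSpace ℝ (Fin m) => η ‖y‖ * y i ^ 2 :=
    not_imp_comm.1 integral_undef (hσ ▸ hσ0)
  have hψ_mass : ∫ v : EuclideanSpace ℝ (Fin m), ψ ‖v‖ = 1 := by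
    simp only [hψ]
    rw [integral_const_mul, integral_setIntegral_Ioi_norm_eq_integral_radial_mul_sq_coord hη, ← hσ,
      one_div_mul_cancel hσ0]
  rw [integral_comp_norm_div volume ψ hr, hψ_mass, finrank_euclideanSpace_fin, smul_eq_mul]
  ring

theorem sq_mul_setIntegral_ball_comp_norm_div (hη0 : ∀ t, 1 < t → η t = 0)
    (hσ : ση = ∫ y in ball (0 : EuclideanSpace ℝ (Fin m)) 1, η ‖y‖ * y i ^ 2) (hσ0 : ση ≠ 0)
    (hψ : ∀ t, ψ t = (1 / ση) * ∫ s in Ioi t, η s * s) {r : ℝ} (hr : 0 < r) :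
    r ^ 2 * ∫ v in ball (0 : EuclideanSpace ℝ (Fin m)) r, ψ (‖v‖ / r) = r ^ (m + 2) := by
  have hψ0 (t : ℝ) (ht : 1 < t) : ψ t = 0 := by
    have hvanish : ∀ s ∈ Ioi t, η s * s = 0 := fun s hs => by rw [hη0 s (ht.trans hs), zero_mul]
    rw [hψ, setIntegral_eq_zero_of_forall_eq_zero hvanish, mul_zero]
  rw [setIntegral_ball_eq_integral volume one_ne_zero fun y hy => by rw [hη0 _ hy, zero_mul]] at hσ
  rw [setIntegral_ball_eq_integral volume hr.ne' fun v hv => hψ0 _ ((one_lt_div hr).2 hv)]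
  exact sq_mul_integral_comp_norm_div hσ hσ0 hψ hr.le

end Normalization

theorem annular_kernel_normalization_general {m : ℕ} (i : Fin m)
    (ση : ℝ) (η : ℝ → ℝ) (hη0 : ∀ t, 1 < t → η t = 0)
    (hσ : ση = ∫ y in Metric.ball (0 : EuclideanSpace ℝ (Fin m)) 1, η ‖y‖ * y i ^ 2)
    (hσ0 : ση ≠ 0)
    (ψ : ℝ → ℝ) (hψ : ∀ t, ψ t = (1 / ση) * ∫ s in Set.Ioi t, η s * s)
    (r₁ r₂ : ℝ) (h1 : 0 < r₁) (h2 : 0 < r₂) :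
    r₁ ^ 2 * (∫ v in Metric.ball (0 : EuclideanSpace ℝ (Fin m)) r₁, ψ (‖v‖ / r₁)) -
      r₂ ^ 2 * (∫ v in Metric.ball (0 : EuclideanSpace ℝ (Fin m)) r₂, ψ (‖v‖ / r₂)) =
      r₁ ^ (m + 2) - r₂ ^ (m + 2) := by
  rw [sq_mul_setIntegral_ball_comp_norm_div hη0 hσ hσ0 hψ h1,
    sq_mul_setIntegral_ball_comp_norm_div hη0 hσ hσ0 hψ h2]

/-- The claim in the proof of Lemma A.3: the normalization constant `C_α` of the annular
smoothing kernel equals `1` in the flat case, i.e.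
`r₁² ∫_{B(0,r₁)} ψ(|v|/r₁) dv − r₂² ∫_{B(0,r₂)} ψ(|v|/r₂) dv = r₁^{m+2} − r₂^{m+2}`,
where `ψ(t) = (1/σ_η) ∫_t^∞ η(s) s ds` and `η` is the indicator of `[0,1]`. -/
theorem annular_kernel_normalization (m : ℕ) (hm : 0 < m)
    (ση : ℝ)
    (hσ : ση = ∫ y in Metric.ball (0 : EuclideanSpace ℝ (Fin m)) 1, (y ⟨0, hm⟩) ^ 2)
    (η : ℝ → ℝ) (hη1 : ∀ t, 0 ≤ t → t ≤ 1 → η t = 1) (hη0 : ∀ t, 1 < t → η t = 0)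
    (ψ : ℝ → ℝ) (hψ : ∀ t, ψ t = (1 / ση) * ∫ s in Set.Ioi t, η s * s)
    (r₁ r₂ : ℝ) (h2 : 0 < r₂) (h12 : r₂ < r₁) :
    r₁ ^ 2 * (∫ v in Metric.ball (0 : EuclideanSpace ℝ (Fin m)) r₁, ψ (‖v‖ / r₁)) -
      r₂ ^ 2 * (∫ v in Metric.ball (0 : EuclideanSpace ℝ (Fin m)) r₂, ψ (‖v‖ / r₂)) =
      r₁ ^ (m + 2) - r₂ ^ (m + 2) := by
  have hη : ∀ y ∈ ball (0 : EuclideanSpace ℝ (Fin m)) 1, y ⟨0, hm⟩ ^ 2 = η ‖y‖ * y ⟨0, hm⟩ ^ 2 :=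
    fun y hy => by rw [hη1 _ (norm_nonneg y) (mem_ball_zero_iff.1 hy).le, one_mul]
  exact annular_kernel_normalization_general ⟨0, hm⟩ ση η hη0
    (hσ.trans (setIntegral_congr_fun measurableSet_ball hη))
    (hσ.trans_ne (setIntegral_ball_sq_coord_pos _ one_pos).ne') ψ hψ r₁ r₂ (h2.trans h12) h2
end

section
/- Let E be a finite-dimensional real inner product space and V a linear subspace of E. Let α ∈ (0, π/2) and let r, ε be real numbers with 0 < r < ε·cos(α). Let y ∈ E and x, y₁ ∈ V be such that ‖x − y‖ ≥ ε, 0 < ‖y₁ − y‖ ≤ r, and the angle between x − y and y₁ − y is strictly less than α. Then dist(y, V) < r·ε·sin(α)/(ε·cos(α) − r). -/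
open Real InnerProductGeometry

/-!
Write `a = x - y`, `b = y₁ - y` and let `θ` be the angle between them. For scalars `u`, `v` with
`u + v ≠ 0` the point `y + (u • a + v • b) / (u + v)` lies on the line through `x` and `y₁`,
hence in the flat, so `|u + v| * dist(y, V) ≤ ‖u • a + v • b‖`. Taking for `u • a + v • b` the
multiple `‖a‖ • b - (‖b‖ * cos θ) • a` of the component of `b` orthogonal to `a` gives
`(‖a‖ - ‖b‖ * cos θ) * dist(y, V) ≤ ‖a‖ * ‖b‖ * sin θ`.
Estimating `cos θ ≤ 1` yields the bound with denominator `ε - r ≥ ε * cos α - r`.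
-/

section Module

variable {𝕜 E P : Type*} [Field 𝕜] [AddCommGroup E] [Module 𝕜 E] [AddTorsor E P]

theorem smul_vsub_add_smul_vsub_eq_smul_lineMap_vsub {u v : 𝕜} (huv : u + v ≠ 0) (p₁ p₂ p : P) :
    u • (p₁ -ᵥ p) + v • (p₂ -ᵥ p) =
      (u + v) • (AffineMap.lineMap p₁ p₂ (v / (u + v)) -ᵥ p) := by
  have hp₂ : p₂ -ᵥ p = (p₂ -ᵥ p₁) + (p₁ -ᵥ p) := (vsub_add_vsub_cancel p₂ p₁ p).symm
  rw [AffineMap.lineMap_apply, vadd_vsub_assoc, smul_add, smul_smul, mul_div_cancel₀ v huv, hp₂]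
  module

end Module

section NormedSpace

variable {𝕜 E P : Type*} [NormedField 𝕜] [SeminormedAddCommGroup E] [NormedSpace 𝕜 E]
  [PseudoMetricSpace P] [NormedAddTorsor E P]

theorem norm_add_mul_infDist_le_norm_smul_vsub_add_smul_vsub {s : AffineSubspace 𝕜 P} {p₁ p₂ : P}
    (hp₁ : p₁ ∈ s) (hp₂ : p₂ ∈ s) (u v : 𝕜) (p : P) :
    ‖u + v‖ * Metric.infDist p (s : Set P) ≤ ‖u • (p₁ -ᵥ p) + v • (p₂ -ᵥ p)‖ := by
  rcases eq_or_ne (u + v) 0 with huv | huv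
  · simp [huv]
  · rw [smul_vsub_add_smul_vsub_eq_smul_lineMap_vsub huv, norm_smul, ← dist_eq_norm_vsub, dist_comm]
    gcongr
    exact Metric.infDist_le_dist_of_mem (AffineMap.lineMap_mem _ hp₁ hp₂)

end NormedSpace

section InnerProductSpace

open scoped EuclideanGeometry

variable {E P : Type*} [NormedAddCommGroup E] [InnerProductSpace ℝ E]
  [MetricSpace P] [NormedAddTorsor E P]

theorem norm_norm_smul_sub_norm_mul_cos_angle_smul (a b : E) :
    ‖‖a‖ • b - (‖b‖ * cos (angle a b)) • a‖ = ‖a‖ * ‖b‖ * sin (angle a b) := by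
  have hsin : 0 ≤ sin (angle a b) := sin_angle_nonneg a b
  have hinner : inner ℝ b a = cos (angle a b) * (‖a‖ * ‖b‖) := by
    rw [real_inner_comm, cos_angle_mul_norm_mul_norm]
  rw [← sq_eq_sq₀ (norm_nonneg _) (by positivity), norm_sub_sq_real, norm_smul, norm_smul,
    real_inner_smul_left, real_inner_smul_right, hinner]
  simp only [norm_eq_abs, mul_pow, sq_abs, sin_sq]
  ring

theorem sub_mul_cos_angle_mul_infDist_le {s : AffineSubspace ℝ P} {p₁ p₂ : P}
    (hp₁ : p₁ ∈ s) (hp₂ : p₂ ∈ s) (p : P) :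
    (dist p₁ p - dist p₂ p * cos (∠ p₁ p p₂)) * Metric.infDist p (s : Set P) ≤
      dist p₁ p * dist p₂ p * sin (∠ p₁ p p₂) := by
  have h := norm_add_mul_infDist_le_norm_smul_vsub_add_smul_vsub hp₁ hp₂
    (-(dist p₂ p * cos (∠ p₁ p p₂))) (dist p₁ p) p
  rw [neg_smul, neg_add_eq_sub, neg_add_eq_sub, dist_eq_norm_vsub E p₁, dist_eq_norm_vsub E p₂,
    EuclideanGeometry.angle, norm_norm_smul_sub_norm_mul_cos_angle_smul] at h
  rw [dist_eq_norm_vsub E p₁, dist_eq_norm_vsub E p₂, EuclideanGeometry.angle]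
  exact (mul_le_mul_of_nonneg_right (le_norm_self _) Metric.infDist_nonneg).trans h

theorem first_step_in_flat_bound_general {s : AffineSubspace ℝ P} {x y y₁ : P} {α r ε : ℝ}
    (hα : α ≤ π / 2) (hrε : r < ε) (hx : x ∈ s) (hy₁ : y₁ ∈ s) (hxy : ε ≤ dist x y)
    (hy₁y0 : 0 < dist y₁ y) (hy₁yr : dist y₁ y ≤ r) (hangle : ∠ x y y₁ < α) :
    Metric.infDist y (s : Set P) < r * ε * sin α / (ε - r) := by
  have hr : 0 < r := hy₁y0.trans_le hy₁yr
  have hε : 0 < ε := hr.trans hrε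
  have hD : 0 < dist x y := hε.trans_le hxy
  have hsin : sin (∠ x y y₁) < sin α :=
    sin_lt_sin_of_lt_of_le_pi_div_two
      (by linarith [EuclideanGeometry.angle_nonneg x y y₁, pi_pos]) hα hangle
  have hstep : dist y₁ y * sin (∠ x y y₁) < r * sin α :=
    mul_lt_mul' hy₁yr hsin (sin_angle_nonneg _ _) hr
  have hdenom : dist x y * (ε - r) ≤ ε * (dist x y - dist y₁ y * cos (∠ x y y₁)) := by
    have hratio : ε * dist y₁ y ≤ dist x y * r := by gcongr
    have hcos : ε * (dist y₁ y * cos (∠ x y y₁)) ≤ ε * dist y₁ y := by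
      gcongr
      exact mul_le_of_le_one_right hy₁y0.le (cos_le_one _)
    linarith
  rw [lt_div_iff₀ (sub_pos.2 hrε)]
  refine lt_of_mul_lt_mul_left ?_ hD.le
  calc dist x y * (Metric.infDist y s * (ε - r))
      = dist x y * (ε - r) * Metric.infDist y s := by ring
    _ ≤ ε * (dist x y - dist y₁ y * cos (∠ x y y₁)) * Metric.infDist y s :=
      mul_le_mul_of_nonneg_right hdenom Metric.infDist_nonneg
    _ = ε * ((dist x y - dist y₁ y * cos (∠ x y y₁)) * Metric.infDist y s) := mul_assoc _ _ _
    _ ≤ ε * (dist x y * dist y₁ y * sin (∠ x y y₁)) :=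
      mul_le_mul_of_nonneg_left (sub_mul_cos_angle_mul_infDist_le hx hy₁ y) hε.le
    _ = ε * dist x y * (dist y₁ y * sin (∠ x y y₁)) := by ring
    _ < ε * dist x y * (r * sin α) := by gcongr
    _ = dist x y * (r * ε * sin α) := by ring

end InnerProductSpace

/-- The quantitative core of Lemma 3.7 (flat case): if `x, y₁ ∈ V`, `‖x − y‖ ≥ ε`,
`0 < ‖y₁ − y‖ ≤ r`, and the angle between `x − y` and `y₁ − y` is less than `α`, where
`0 < r < ε·cos(α)`, then `dist(y, V) < r·ε·sin(α)/(ε·cos(α) − r)`. -/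
theorem first_step_in_flat_bound {E : Type*} [NormedAddCommGroup E]
    [InnerProductSpace ℝ E] [FiniteDimensional ℝ E]
    (V : Submodule ℝ E)
    (α : ℝ) (hα0 : 0 < α) (hα : α < π / 2)
    (r ε : ℝ) (hr : 0 < r) (hrε : r < ε * Real.cos α)
    (y : E) (x y₁ : E) (hx : x ∈ V) (hy₁ : y₁ ∈ V)
    (hxy : ‖x - y‖ ≥ ε) (hy₁y0 : 0 < ‖y₁ - y‖) (hy₁yr : ‖y₁ - y‖ ≤ r)
    (hangle : InnerProductGeometry.angle (x - y) (y₁ - y) < α) :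
    Metric.infDist y (V : Set E) < r * ε * Real.sin α / (ε * Real.cos α - r) := by
  have hcos : 0 < cos α := cos_pos_of_mem_Ioo ⟨by linarith, hα⟩
  have hsin : 0 < sin α := sin_pos_of_pos_of_lt_pi hα0 (by linarith)
  have hε : 0 < ε := pos_of_mul_pos_left (hr.trans hrε) hcos.le
  have hεcos : ε * cos α ≤ ε := mul_le_of_le_one_right hε.le (cos_le_one α)
  rw [← dist_eq_norm] at hxy hy₁y0 hy₁yr
  calc Metric.infDist y V < r * ε * sin α / (ε - r) :=
        first_step_in_flat_bound_general (s := V.toAffineSubspace) hα.le (hrε.trans_le hεcos)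
          hx hy₁ hxy hy₁y0 hy₁yr hangle
    _ ≤ r * ε * sin α / (ε * cos α - r) := by gcongr
end
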